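/- arXiv:math/0608649 — 2 statements merged into one kernel-verified Lean document; each statement's English description precedes it below -/
import Mathlib

section
/- Let p be an odd prime, let q ∈ ℚ_p satisfy |q - 1|_p < 1 with q ≠ 1, let n be a nonnegative integer, and let x be a nonnegative integer. Then the p-adic q-Riemann sums (1/[p^N]_{-q}) · Σ_{y=0}^{p^N - 1} [x+y]_q^n (-q)^y converge as N → ∞, and their limit E_{n,q}(x) equals (1+q) · (1/(1-q))^n · Σ_{l=0}^n C(n,l) (-1)^l q^{l·x} / (1 + q^{l+1}). -/
/-!
Expanding `[x+y]_q ^ n` by the binomial theorem turns the Riemann sum of odd length `M` into a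
combination of geometric sums with ratios `-q ^ (l+1)`, so it equals
`(1 + q) (1/(1-q))^n ∑ C(n,l) (-1)^l q^(l x) / (1 + q^(l+1)) * (1 + t^(l+1)) / (1 + t)` at
`t = q ^ M`. For fixed `q` this is a function of `t` alone, continuous at `t = 1`, where the factor
`(1 + t^(l+1)) / (1 + t)` is `1`. It remains to see that `q ^ p ^ N → 1`: as
`q ^ p - 1 = (1 + q + ⋯ + q ^ (p-1)) (q - 1)`, and the sum is `p` modulo `q - 1`, each `p`-th power
multiplies the distance to `1` by at most `max |p| |q - 1| < 1`.
-/

open Filter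

section Ultrametric

variable {R : Type*} [SeminormedRing R] [NormOneClass R] [IsUltrametricDist R] {a : R} {m : ℕ}

lemma norm_le_one_of_norm_sub_one_le_one (ha : ‖a - 1‖ ≤ 1) : ‖a‖ ≤ 1 := by
  simpa [ha] using IsUltrametricDist.norm_add_one_le_max_norm_one (a - 1)

lemma norm_geom_sum_le_one (ha : ‖a‖ ≤ 1) (k : ℕ) : ‖∑ i ∈ Finset.range k, a ^ i‖ ≤ 1 :=
  IsUltrametricDist.norm_sum_le_of_forall_le_of_nonneg zero_le_one fun i _ =>
    (norm_pow_le a i).trans (pow_le_one₀ (norm_nonneg a) ha)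

lemma norm_pow_sub_one_le (ha : ‖a - 1‖ ≤ 1) (k : ℕ) : ‖a ^ k - 1‖ ≤ ‖a - 1‖ := by
  rw [← geom_sum_mul]
  exact (norm_mul_le _ _).trans <| mul_le_of_le_one_left (norm_nonneg _) <|
    norm_geom_sum_le_one (norm_le_one_of_norm_sub_one_le_one ha) k

lemma norm_geom_sum_le_max (ha : ‖a - 1‖ ≤ 1) (m : ℕ) :
    ‖∑ i ∈ Finset.range m, a ^ i‖ ≤ max ‖(m : R)‖ ‖a - 1‖ := by
  have split_sum : ∑ i ∈ Finset.range m, a ^ i = m + ∑ i ∈ Finset.range m, (a ^ i - 1) := by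
    simp
  rw [split_sum]
  refine (IsUltrametricDist.norm_add_le_max _ _).trans (max_le_max le_rfl ?_)
  exact IsUltrametricDist.norm_sum_le_of_forall_le_of_nonneg (norm_nonneg _) fun i _ =>
    norm_pow_sub_one_le ha i

lemma norm_pow_sub_one_le_max_mul (ha : ‖a - 1‖ ≤ 1) (m : ℕ) :
    ‖a ^ m - 1‖ ≤ max ‖(m : R)‖ ‖a - 1‖ * ‖a - 1‖ := by
  rw [← geom_sum_mul]
  exact (norm_mul_le _ _).trans <|
    mul_le_mul_of_nonneg_right (norm_geom_sum_le_max ha m) (norm_nonneg _)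

lemma norm_pow_pow_sub_one_le (ha : ‖a - 1‖ ≤ 1) (m N : ℕ) :
    ‖a ^ m ^ N - 1‖ ≤ max ‖(m : R)‖ ‖a - 1‖ ^ N * ‖a - 1‖ := by
  induction N with
  | zero => simp
  | succ N ih =>
    have hN : ‖a ^ m ^ N - 1‖ ≤ ‖a - 1‖ := norm_pow_sub_one_le ha _
    calc ‖a ^ m ^ (N + 1) - 1‖
        = ‖(a ^ m ^ N) ^ m - 1‖ := by rw [pow_succ, pow_mul]
      _ ≤ max ‖(m : R)‖ ‖a ^ m ^ N - 1‖ * ‖a ^ m ^ N - 1‖ :=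
        norm_pow_sub_one_le_max_mul (hN.trans ha) m
      _ ≤ max ‖(m : R)‖ ‖a - 1‖ * (max ‖(m : R)‖ ‖a - 1‖ ^ N * ‖a - 1‖) := by gcongr
      _ = max ‖(m : R)‖ ‖a - 1‖ ^ (N + 1) * ‖a - 1‖ := by ring

lemma tendsto_pow_pow_nhds_one (hm : ‖(m : R)‖ < 1) (ha : ‖a - 1‖ < 1) :
    Tendsto (fun N : ℕ => a ^ m ^ N) atTop (nhds 1) := by
  rw [tendsto_iff_norm_sub_tendsto_zero]
  refine squeeze_zero (fun _ => norm_nonneg _) (norm_pow_pow_sub_one_le ha.le m) ?_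
  have geometric := tendsto_pow_atTop_nhds_zero_of_lt_one
    (le_max_of_le_left (norm_nonneg (m : R))) (max_lt hm ha)
  simpa using geometric.mul_const ‖a - 1‖

lemma one_le_norm_two_of_odd (hodd : Odd m) (hm : ‖(m : R)‖ < 1) : 1 ≤ ‖(2 : R)‖ := by
  obtain ⟨k, rfl⟩ := hodd
  by_contra! two_lt
  have two_mul_lt : ‖(2 * k : R)‖ < 1 :=
    (norm_mul_le _ _).trans_lt <| mul_lt_one_of_nonneg_of_lt_one_left (norm_nonneg _) two_lt
      (IsUltrametricDist.norm_natCast_le_one R k)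
  have one_lt : ‖((2 * k + 1 : ℕ) : R) + -(2 * k)‖ < 1 :=
    (IsUltrametricDist.norm_add_le_max _ _).trans_lt (max_lt hm (by rwa [norm_neg]))
  simp at one_lt

lemma one_add_pow_ne_zero (h2 : 1 ≤ ‖(2 : R)‖) (ha : ‖a - 1‖ < 1) (k : ℕ) : 1 + a ^ k ≠ 0 := by
  intro h
  have eq_neg_two : a ^ k - 1 = -2 := by
    rw [eq_neg_of_add_eq_zero_right h]
    norm_num
  have := norm_pow_sub_one_le ha.le k
  rw [eq_neg_two, norm_neg] at this
  linarith

end Ultrametric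

lemma one_sub_pow_eq_sum {R : Type*} [Ring R] (a : R) (n : ℕ) :
    (1 - a) ^ n = ∑ l ∈ Finset.range (n + 1), (n.choose l : R) * (-1) ^ l * a ^ l := by
  rw [sub_eq_neg_add, (Commute.one_right (-a)).add_pow]
  refine Finset.sum_congr rfl fun l _ => ?_
  rw [one_pow, mul_one, neg_pow, ← Nat.cast_comm, mul_assoc]

lemma geom_sum_neg_of_odd {K : Type*} [DivisionRing K] {a : K} {M : ℕ} (hM : Odd M)
    (ha : 1 + a ≠ 0) : ∑ y ∈ Finset.range M, (-a) ^ y = (1 + a ^ M) / (1 + a) := by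
  rw [eq_div_iff ha]
  simpa [hM.neg_pow] using geom_sum_mul_neg (-a) M

section RiemannSum

variable {K : Type*} [Field K] {q : K}

/-- The `q`-Riemann sum `(1/[M]_{-q}) ∑_{y < M} [x+y]_q^n (-q)^y` of length `M`. -/
def qRiemannSum (q : K) (n x M : ℕ) : K :=
  (1 / ((1 - (-q) ^ M) / (1 + q))) *
    ∑ y ∈ Finset.range M, ((1 - q ^ (x + y)) / (1 - q)) ^ n * (-q) ^ y

/-- The closed form `E_{n,q}(x)` of the limit of the `q`-Riemann sums. -/
def qEuler (q : K) (n x : ℕ) : K :=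
  (1 + q) * (1 / (1 - q)) ^ n *
    ∑ l ∈ Finset.range (n + 1), (n.choose l : K) * (-1) ^ l * q ^ (l * x) / (1 + q ^ (l + 1))

/-- The function of `t` through which the `q`-Riemann sums of odd length `M` factor: they are its
values at `t = q ^ M`, and `E_{n,q}(x)` is its value at `t = 1`. -/
def qRiemannInterpolant (q : K) (n x : ℕ) (t : K) : K :=
  (1 + q) * (1 / (1 - q)) ^ n *
    (∑ l ∈ Finset.range (n + 1),
      (n.choose l : K) * (-1) ^ l * q ^ (l * x) / (1 + q ^ (l + 1)) * (1 + t ^ (l + 1))) / (1 + t)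

lemma qRiemannInterpolant_one (h2 : (1 : K) + 1 ≠ 0) (q : K) (n x : ℕ) :
    qRiemannInterpolant q n x 1 = qEuler q n x := by
  simp only [qRiemannInterpolant, qEuler, one_pow, ← Finset.sum_mul]
  rw [← mul_assoc, mul_div_cancel_right₀ _ h2]

lemma sum_one_sub_pow_mul_neg_pow (hq : ∀ k : ℕ, 1 + q ^ k ≠ 0) (n x : ℕ) {M : ℕ} (hM : Odd M) :
    ∑ y ∈ Finset.range M, (1 - q ^ (x + y)) ^ n * (-q) ^ y =
      ∑ l ∈ Finset.range (n + 1), (n.choose l : K) * (-1) ^ l * q ^ (l * x) / (1 + q ^ (l + 1)) *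
        (1 + (q ^ M) ^ (l + 1)) := by
  have term_eq (l y : ℕ) : (n.choose l : K) * (-1) ^ l * (q ^ (x + y)) ^ l * (-q) ^ y =
      (n.choose l : K) * (-1) ^ l * q ^ (l * x) * (-q ^ (l + 1)) ^ y := by
    rw [neg_pow q, neg_pow (q ^ (l + 1))]
    ring
  simp_rw [one_sub_pow_eq_sum, Finset.sum_mul, term_eq]
  rw [Finset.sum_comm]
  refine Finset.sum_congr rfl fun l _ => ?_
  rw [← Finset.mul_sum, geom_sum_neg_of_odd hM (hq (l + 1)), pow_right_comm]
  ring

lemma qRiemannSum_eq_qRiemannInterpolant (hq : ∀ k : ℕ, 1 + q ^ k ≠ 0) (n x : ℕ) {M : ℕ}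
    (hM : Odd M) : qRiemannSum q n x M = qRiemannInterpolant q n x (q ^ M) := by
  have factor_out : ∑ y ∈ Finset.range M, ((1 - q ^ (x + y)) / (1 - q)) ^ n * (-q) ^ y =
      (1 / (1 - q)) ^ n * ∑ y ∈ Finset.range M, (1 - q ^ (x + y)) ^ n * (-q) ^ y := by
    rw [Finset.mul_sum]
    exact Finset.sum_congr rfl fun y _ => by
      rw [div_eq_mul_one_div, mul_pow, mul_right_comm, mul_comm]
  rw [qRiemannSum, qRiemannInterpolant, factor_out, sum_one_sub_pow_mul_neg_pow hq n x hM,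
    hM.neg_pow, sub_neg_eq_add, one_div_div]
  ring

variable [TopologicalSpace K] [IsTopologicalDivisionRing K]

lemma continuousAt_qRiemannInterpolant (q : K) (n x : ℕ) {t : K} (ht : 1 + t ≠ 0) :
    ContinuousAt (qRiemannInterpolant q n x) t := by
  unfold qRiemannInterpolant
  fun_prop (disch := exact ht)

lemma tendsto_qRiemannSum {ι : Type*} {f : Filter ι} {M : ι → ℕ} (hM : ∀ i, Odd (M i))
    (hlim : Tendsto (fun i => q ^ M i) f (nhds 1)) (hq : ∀ k : ℕ, 1 + q ^ k ≠ 0) (n x : ℕ) :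
    Tendsto (fun i => qRiemannSum q n x (M i)) f (nhds (qEuler q n x)) := by
  have h2 : (1 : K) + 1 ≠ 0 := by simpa using hq 0
  simp_rw [qRiemannSum_eq_qRiemannInterpolant hq n x (hM _)]
  rw [← qRiemannInterpolant_one h2]
  exact (continuousAt_qRiemannInterpolant q n x h2).tendsto.comp hlim

end RiemannSum

theorem stmt_11_general {K : Type*} [NormedField K] [IsUltrametricDist K] {m : ℕ} (hodd : Odd m)
    (hm : ‖(m : K)‖ < 1) {q : K} (hq1 : ‖q - 1‖ < 1) (_hq : q ≠ 1) (n x : ℕ) :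
    Tendsto (fun N : ℕ => qRiemannSum q n x (m ^ N)) atTop (nhds (qEuler q n x)) :=
  tendsto_qRiemannSum (fun _ => hodd.pow) (tendsto_pow_pow_nhds_one hm hq1)
    (one_add_pow_ne_zero (one_le_norm_two_of_odd hodd hm) hq1) n x

/-- Let `p` be an odd prime, `q ∈ ℚ_p` with `|q-1|_p < 1`, `q ≠ 1`, `n x : ℕ`.
Then the `p`-adic `q`-Riemann sums `(1/[p^N]_{-q}) Σ_{y=0}^{p^N-1} [x+y]_q^n (-q)^y` converge
as `N → ∞` to `(1+q) · (1/(1-q))^n · Σ_{l=0}^n C(n,l)(-1)^l q^{l·x}/(1+q^{l+1})`. -/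
theorem stmt_11 (p : ℕ) [Fact p.Prime] (hodd : Odd p)
    (q : ℚ_[p]) (hq1 : ‖q - 1‖ < 1) (hq : q ≠ 1) (n x : ℕ) :
    Tendsto (fun N : ℕ =>
        (1 / ((1 - (-q) ^ (p ^ N)) / (1 + q))) *
          ∑ y ∈ Finset.range (p ^ N), ((1 - q ^ (x + y)) / (1 - q)) ^ n * (-q) ^ y)
      atTop
      (nhds ((1 + q) * (1 / (1 - q)) ^ n *
        ∑ l ∈ Finset.range (n + 1),
          (n.choose l : ℚ_[p]) * (-1) ^ l * q ^ (l * x) / (1 + q ^ (l + 1)))) :=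
  stmt_11_general hodd Padic.norm_p_lt_one hq1 hq n x
end

section
/- Let p be an odd prime, let q ∈ ℚ_p satisfy |q - 1|_p < 1 with q ≠ 1. Define in ℚ_p the q-Euler numbers E_{n,q} = (1+q) · (1/(1-q))^n · Σ_{l=0}^n C(n,l) (-1)^l / (1 + q^{l+1}). Then q · Σ_{l=0}^n C(n,l) q^l E_{l,q} + E_{n,q} equals 1+q if n = 0, and equals 0 if n > 0. -/
/-!
Write `I` for the linear functional on polynomials in `X` with
`I (X ^ l) = (1 + q) / (1 + q ^ (l + 1))`. Reading `X` as `q ^ x`, it is the fermionic `p`-adic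
`q`-integral; the shift `x ↦ x + 1` becomes `X ↦ q X`, and comparing both sides on monomials gives
`q * I (f (q X)) + I f = (1 + q) * f 1`.

The bracket `[x] = (1 - q ^ x) / (1 - q)` satisfies `[x + 1] = 1 + q [x]`, and
`E_{n,q} = I ([x] ^ n)` by the binomial theorem. Taking `f = [x] ^ n` and expanding
`(1 + q [x]) ^ n` yields the recurrence, with right-hand side `(1 + q) * [0] ^ n`.

The denominators do not vanish because `|q ^ m - 1| < 1` for all `m`, whereas `q ^ m = -1` would
make this norm `|2| = 1`.
-/

section NonvanishingDenominators

variable {R : Type*} [NormedRing R] [NormOneClass R] [IsUltrametricDist R] {x : R}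

theorem norm_pow_sub_one_lt_one_of_norm_sub_one_lt_one (hx : ‖x - 1‖ < 1) (m : ℕ) :
    ‖x ^ m - 1‖ < 1 := by
  have norm_le_one : ‖x‖ ≤ 1 := by
    simpa [hx.le] using IsUltrametricDist.norm_add_one_le_max_norm_one (x - 1)
  induction m with
  | zero => simp
  | succ m ih =>
    have norm_pow_mul_lt : ‖x ^ m * (x - 1)‖ < 1 :=
      calc ‖x ^ m * (x - 1)‖ ≤ ‖x ^ m‖ * ‖x - 1‖ := norm_mul_le _ _
        _ ≤ 1 * ‖x - 1‖ := by
          gcongr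
          exact (norm_pow_le x m).trans (pow_le_one₀ (norm_nonneg x) norm_le_one)
        _ < 1 := by rwa [one_mul]
    have telescope : x ^ (m + 1) - 1 = x ^ m * (x - 1) + (x ^ m - 1) := by
      rw [pow_succ]
      noncomm_ring
    rw [telescope]
    exact (IsUltrametricDist.norm_add_le_max _ _).trans_lt (max_lt norm_pow_mul_lt ih)

theorem one_add_pow_ne_zero_of_norm_sub_one_lt_one (h2 : 1 ≤ ‖(2 : R)‖) (hx : ‖x - 1‖ < 1)
    (m : ℕ) : 1 + x ^ m ≠ 0 := by
  intro h
  have pow_sub_one : x ^ m - 1 = -2 := by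
    rw [eq_neg_of_add_eq_zero_right h]
    norm_num
  have norm_lt := norm_pow_sub_one_lt_one_of_norm_sub_one_lt_one hx m
  rw [pow_sub_one, norm_neg] at norm_lt
  exact h2.not_gt norm_lt

end NonvanishingDenominators

theorem padic_norm_two_eq_one {p : ℕ} [Fact p.Prime] (hodd : Odd p) : ‖(2 : ℚ_[p])‖ = 1 :=
  mod_cast Padic.norm_natCast_eq_one_iff.mpr hodd.coprime_two_right

section Polynomial

open Polynomial

variable {K : Type*} [Field K] {q : K}

/-- The `q`-Euler number `E_{k,q}`, over any field; it has its intended value when `q ≠ 1` and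
`1 + q ^ (l + 1) ≠ 0` for all `l ≤ k`. -/
def qEulerNumber (q : K) (k : ℕ) : K :=
  (1 + q) * (1 / (1 - q)) ^ k *
    ∑ l ∈ Finset.range (k + 1), (k.choose l : K) * (-1) ^ l / (1 + q ^ (l + 1))

/-- The `q`-bracket `[x] = (1 - q ^ x) / (1 - q)`, as a polynomial in `X = q ^ x`. -/
noncomputable def qBracket (q : K) : K[X] :=
  (1 / (1 - q)) • (1 - X)

theorem eval_one_qBracket (q : K) : (qBracket q).eval 1 = 0 := by
  simp [qBracket]

theorem natDegree_qBracket_le (q : K) : (qBracket q).natDegree ≤ 1 := by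
  unfold qBracket
  compute_degree

theorem qBracket_comp_C_mul_X (hq : q ≠ 1) :
    (qBracket q).comp (C q * X) = q • qBracket q + 1 := by
  have inv_mul : C (1 / (1 - q)) * (1 - C q) = 1 := by
    rw [← C_1, ← C_sub, ← C_mul, one_div_mul_cancel (sub_ne_zero.mpr hq.symm)]
  simp only [qBracket, smul_eq_C_mul, mul_comp, sub_comp, C_comp, one_comp, X_comp]
  linear_combination inv_mul

/-- The fermionic `q`-integral `∫ f(q ^ x) dμ_{-q}(x)` on polynomials `f`, encoded by its values
`(1 + q) / (1 + q ^ (l + 1))` on the monomials `X ^ l`. -/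
noncomputable def fermionicIntegral (q : K) : K[X] →ₗ[K] K :=
  lsum fun l => LinearMap.mulRight K ((1 + q) / (1 + q ^ (l + 1)))

theorem fermionicIntegral_C_mul_X_pow (q a : K) (l : ℕ) :
    fermionicIntegral q (C a * X ^ l) = a * ((1 + q) / (1 + q ^ (l + 1))) := by
  simp [fermionicIntegral, lsum_apply, C_mul_X_pow_eq_monomial, sum_monomial_index]

theorem fermionicIntegral_comp_C_mul_X {n : ℕ} (h : ∀ l ≤ n, 1 + q ^ (l + 1) ≠ 0) {f : K[X]}
    (hf : f.natDegree ≤ n) :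
    q * fermionicIntegral q (f.comp (C q * X)) + fermionicIntegral q f =
      (1 + q) * f.eval 1 := by
  apply induction_with_natDegree_le (N := n) (df := hf)
  case zero => simp
  case C_mul_pow =>
    intro l a _ hl
    have comp_monomial : (C a * X ^ l).comp (C q * X) = C (a * q ^ l) * X ^ l := by
      simp [mul_pow, mul_assoc]
    have denominator_ne_zero := h l hl
    rw [comp_monomial, fermionicIntegral_C_mul_X_pow, fermionicIntegral_C_mul_X_pow]
    simp only [eval_mul, eval_C, eval_pow, eval_X, one_pow, mul_one]
    field_simp
    ring
  case add =>
    intro f g _ _ hf hg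
    rw [add_comp, map_add, map_add, eval_add]
    linear_combination hf + hg

theorem one_sub_X_pow_eq_sum {R : Type*} [CommRing R] (k : ℕ) :
    (1 - X : R[X]) ^ k =
      ∑ l ∈ Finset.range (k + 1), C ((k.choose l : R) * (-1) ^ l) * X ^ l := by
  rw [sub_eq_neg_add, add_pow]
  refine Finset.sum_congr rfl fun l _ => ?_
  rw [neg_pow]
  simp only [one_pow, C_mul, C_pow, C_neg, C_1, map_natCast]
  ring

theorem fermionicIntegral_qBracket_pow (q : K) (k : ℕ) :
    fermionicIntegral q (qBracket q ^ k) = qEulerNumber q k := by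
  rw [qBracket, _root_.smul_pow, map_smul, one_sub_X_pow_eq_sum, map_sum, qEulerNumber, smul_eq_mul,
    mul_comm (1 + q), mul_assoc, Finset.mul_sum _ _ (1 + q)]
  congr 1
  refine Finset.sum_congr rfl fun l _ => ?_
  rw [fermionicIntegral_C_mul_X_pow]
  ring

theorem fermionicIntegral_qBracket_pow_comp_C_mul_X (hq : q ≠ 1) (n : ℕ) :
    fermionicIntegral q ((qBracket q ^ n).comp (C q * X)) =
      ∑ l ∈ Finset.range (n + 1), (n.choose l : K) * q ^ l * qEulerNumber q l := by
  rw [pow_comp, qBracket_comp_C_mul_X hq, add_pow, map_sum]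
  refine Finset.sum_congr rfl fun l _ => ?_
  have binomial_term : (q • qBracket q) ^ l * 1 ^ (n - l) * (n.choose l : K[X]) =
      ((n.choose l : K) * q ^ l) • qBracket q ^ l := by
    rw [_root_.smul_pow, one_pow, mul_one, mul_comm, smul_eq_C_mul, smul_eq_C_mul, C_mul,
      map_natCast, mul_assoc]
  rw [binomial_term, map_smul, fermionicIntegral_qBracket_pow, smul_eq_mul]

theorem stmt_12_general (hq : q ≠ 1) (n : ℕ) (h : ∀ l ≤ n, 1 + q ^ (l + 1) ≠ 0) :
    q * (∑ l ∈ Finset.range (n + 1), (n.choose l : K) * q ^ l * qEulerNumber q l) +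
      qEulerNumber q n = if n = 0 then 1 + q else 0 := by
  have natDegree_le : (qBracket q ^ n).natDegree ≤ n := by
    simpa using natDegree_pow_le_of_le n (natDegree_qBracket_le q)
  rw [← fermionicIntegral_qBracket_pow_comp_C_mul_X hq, ← fermionicIntegral_qBracket_pow,
    fermionicIntegral_comp_C_mul_X h natDegree_le, eval_pow, eval_one_qBracket, zero_pow_eq,
    mul_ite, mul_one, mul_zero]

end Polynomial

/-- Let `p` be an odd prime, `q ∈ ℚ_p` with `|q-1|_p < 1`, `q ≠ 1`, and let
`E_{n,q} = (1+q) · (1/(1-q))^n · Σ_{l=0}^n C(n,l)(-1)^l/(1+q^{l+1})`. Then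
`q · Σ_{l=0}^n C(n,l) q^l E_{l,q} + E_{n,q}` equals `1+q` if `n = 0` and `0` if `n > 0`. -/
theorem stmt_12 (p : ℕ) [Fact p.Prime] (hodd : Odd p)
    (q : ℚ_[p]) (hq1 : ‖q - 1‖ < 1) (hq : q ≠ 1)
    (E : ℕ → ℚ_[p])
    (hE : ∀ k : ℕ, E k = (1 + q) * (1 / (1 - q)) ^ k *
      ∑ l ∈ Finset.range (k + 1), (k.choose l : ℚ_[p]) * (-1) ^ l / (1 + q ^ (l + 1)))
    (n : ℕ) :
    q * (∑ l ∈ Finset.range (n + 1), (n.choose l : ℚ_[p]) * q ^ l * E l) + E n =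
      if n = 0 then 1 + q else 0 := by
  obtain rfl : E = qEulerNumber q := funext hE
  exact stmt_12_general hq n fun l _ =>
    one_add_pow_ne_zero_of_norm_sub_one_lt_one (padic_norm_two_eq_one hodd).ge hq1 (l + 1)
end
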